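/- Let p be an odd prime, let l be a positive integer and let i be an integer with i > l. Then the p-primary component (i.e. the subgroup of elements of p-power order) of the i-th group cohomology of G = ℤ/2pℤ × ℤ^l with coefficients in ℤ with trivial G-action is isomorphic, as an abelian group, to (ℤ/pℤ)^{2^{l-1}}. -/

import Mathlib

open CategoryTheory Limits

namespace groupCohomology
open Rep

/-- Representations coinduced from the trivial subgroup have no cohomology in positive degrees. -/
lemma isZero_coind_bot {k G : Type} [CommRing k] [Group G]
    (A : Rep.{0} k (⊥ : Subgroup G)) (n : ℕ) :
    IsZero (groupCohomology (coind (⊥ : Subgroup G).subtype A) (n + 1)) :=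
  (isZero_groupCohomology_succ_of_subsingleton A n).of_iso (coindIso A (n + 1))

/-- Elements of a commutative group act trivially on its cohomology. -/
theorem map_applyAsHom {k G : Type} [CommRing k] [CommGroup G] (A : Rep.{0} k G) (g : G) (n : ℕ) :
    map (MonoidHom.id G) (A.applyAsHom g) n = 𝟙 (groupCohomology A n) := by
  induction n generalizing A with
  | zero =>
    rw [← cancel_mono (H0Iso A).hom, map_id_comp_H0Iso_hom, Category.id_comp]
    have : (invariantsFunctor k G).map (A.applyAsHom g) = 𝟙 _ := by
      ext x
      exact Subtype.ext (x.2 g)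
    rw [this]
    exact Category.comp_id _
  | succ n ih =>
    let ι : A ⟶ coind (⊥ : Subgroup G).subtype (res (⊥ : Subgroup G).subtype A) :=
      resCoindToHom _ _ _ (𝟙 _)
    have : Mono ι := by
      rw [Rep.mono_iff_injective]
      intro x y h
      have := congr_fun (congr_arg Subtype.val h) 1
      simpa [ι] using this
    have hX : (ShortComplex.mk ι (cokernel.π ι) (by simp)).ShortExact :=
      { exact := ShortComplex.exact_cokernel ι }
    have := epi_δ_of_isZero hX n (isZero_coind_bot _ n)
    rw [← cancel_epi (δ hX n (n + 1) rfl)]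
    have nat := δ_naturality hX hX
      { τ₁ := applyAsHom _ g, τ₂ := applyAsHom _ g, τ₃ := applyAsHom _ g
        comm₁₂ := applyAsHom_comm _ _
        comm₂₃ := applyAsHom_comm _ _ } n (n + 1) rfl
    dsimp only at nat
    rw [nat, ih, Category.id_comp, Category.comp_id]

lemma exact_of_forall_exists {k G : Type} [CommRing k] [Group G] (X : ShortComplex (Rep.{0} k G))
    (h : ∀ y : X.X₂, X.g.hom y = 0 → ∃ x : X.X₁, X.f.hom x = y) : X.Exact := by
  rw [← ShortComplex.exact_map_iff_of_faithful _ (forget₂ (Rep k G) (ModuleCat k)),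
    ShortComplex.moduleCat_exact_iff]
  exact h

variable {G : Type} [CommGroup G] (χ : G →* Multiplicative ℤ) (V : Type) [AddCommGroup V]

/-- The inclusion of the constant functions into a coinduced trivial representation. -/
noncomputable def trivialToCoind (S : Subgroup G) :
    Rep.trivial ℤ G V ⟶ coind S.subtype (Rep.trivial ℤ S V) :=
  resCoindToHom _ _ _ (𝟙 _)

lemma trivialToCoind_apply (S : Subgroup G) (v : V) (g : G) :
    ((trivialToCoind V S).hom v).1 g = v := rfl

lemma exists_int_primitive (u : ℤ → V) : ∃ F : ℤ → V, ∀ m, F (m + 1) - F m = u m := by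
  refine ⟨fun m ↦ ∑ j ∈ Finset.Ico 0 m, u j - ∑ j ∈ Finset.Ico m 0, u j, fun m ↦ ?_⟩
  beta_reduce
  rcases le_or_gt 0 m with hm | hm
  · rw [← Finset.insert_Ico_right_eq_Ico_add_one hm]
    simp [Finset.Ico_eq_empty_of_le hm, Finset.Ico_eq_empty_of_le (show 0 ≤ m + 1 by lia)]
  · rw [← Finset.insert_Ico_add_one_left_eq_Ico hm]
    simp [Finset.Ico_eq_empty_of_le hm.le, Finset.Ico_eq_empty_of_le (show m + 1 ≤ 0 by lia)]

/-- If `χ z = 1` for a character `χ : G → ℤ`, then `f ↦ z • f - f` is a surjective endomorphism of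
`coind (ker χ) V` whose kernel consists of the constant functions. -/
theorem shortExact_coind_ker (z : G) (hz : χ z = Multiplicative.ofAdd 1) :
    ∃ w, (ShortComplex.mk (trivialToCoind V χ.ker)
      (applyAsHom (coind χ.ker.subtype (Rep.trivial ℤ χ.ker V)) z - 𝟙 _) w).ShortExact := by
  have hw : trivialToCoind V χ.ker ≫
      (applyAsHom (coind χ.ker.subtype (Rep.trivial ℤ χ.ker V)) z - 𝟙 _) = 0 := by
    ext v g
    exact sub_self v
  have key (f : coind χ.ker.subtype (Rep.trivial ℤ χ.ker V)) (g h : G) (hgh : χ g = χ h) :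
      f.1 g = f.1 h := by
    have := f.2 ⟨g * h⁻¹, by simp [MonoidHom.mem_ker, hgh]⟩ h
    simpa using this
  have sub_apply (f : coind χ.ker.subtype (Rep.trivial ℤ χ.ker V)) (g : G) :
      ((applyAsHom (coind χ.ker.subtype (Rep.trivial ℤ χ.ker V)) z - 𝟙 _).hom f).1 g
        = f.1 (g * z) - f.1 g := rfl
  refine ⟨hw, ?_⟩
  have hm : Mono (trivialToCoind V χ.ker) := by
    rw [Rep.mono_iff_injective]
    intro x y h
    exact congr_fun (congr_arg Subtype.val h) 1
  have he : Epi (applyAsHom (coind χ.ker.subtype (Rep.trivial ℤ χ.ker V)) z - 𝟙 _) := by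
    rw [Rep.epi_iff_surjective]
    intro u
    obtain ⟨F, hF⟩ := exists_int_primitive V (fun m ↦ u.1 (z ^ m))
    refine ⟨⟨fun g ↦ F (χ g).toAdd, fun s g ↦ ?_⟩, Subtype.ext (funext fun g ↦ ?_)⟩
    · have := s.2
      rw [MonoidHom.mem_ker] at this
      simp [this]
    · rw [sub_apply]
      simp only [map_mul, hz, toAdd_mul, toAdd_ofAdd, hF]
      apply key
      rw [map_zpow, hz, ← ofAdd_zsmul]
      simp
  refine { exact := ?_, mono_f := hm, epi_g := he }
  refine exact_of_forall_exists _ fun f hf ↦ ?_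
  refine ⟨f.1 1, Subtype.ext (funext fun g ↦ ?_)⟩
  refine (trivialToCoind_apply V χ.ker (f.1 1) g).trans ?_
  have step (g : G) : f.1 (g * z) = f.1 g := by
    rw [← sub_eq_zero, ← sub_apply]
    exact congr_fun (congr_arg Subtype.val hf) g
  have all (m : ℤ) : f.1 (z ^ m) = f.1 1 := by
    induction m with
    | zero => simp
    | succ n ih => rw [zpow_add_one, step, ih]
    | pred n ih => rw [← ih, ← step, zpow_sub_one, inv_mul_cancel_right]
  rw [← all (χ g).toAdd]
  apply key
  rw [map_zpow, hz, ← ofAdd_zsmul]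
  simp

theorem map_applyAsHom_sub_id {k : Type} [CommRing k] (A : Rep.{0} k G) (g : G) (n : ℕ) :
    map (MonoidHom.id G) (A.applyAsHom g - 𝟙 A) n = 0 := by
  have : cochainsMap (MonoidHom.id G) (A.applyAsHom g - 𝟙 A) =
      cochainsMap (MonoidHom.id G) (A.applyAsHom g) - cochainsMap (MonoidHom.id G) (𝟙 A) := rfl
  have h := map_applyAsHom A g n
  rw [← map_id (B := A) (n := n)] at h
  rw [map, this, HomologicalComplex.homologyMap_sub]
  exact sub_eq_zero.2 h

lemma natCard_eq_mul {R : Type} [CommRing R] {A B C : ModuleCat.{0} R} (f : A ⟶ B) (g : B ⟶ C) (w : f ≫ g = 0)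
    (h : (ShortComplex.mk f g w).ShortExact) : Nat.card B = Nat.card A * Nat.card C := by
  have hf := (ModuleCat.mono_iff_injective f).1 h.mono_f
  have hg := (ModuleCat.epi_iff_surjective g).1 h.epi_g
  have hr := h.exact.moduleCat_range_eq_ker
  rw [← (LinearMap.ker g.hom).toAddSubgroup.card_mul_index]
  congr 1
  · rw [← hr]
    exact Nat.card_congr (LinearEquiv.ofInjective f.hom hf).toEquiv.symm
  · exact Nat.card_congr (g.hom.quotKerEquivOfSurjective hg).toEquiv

lemma natCard_succ_eq_mul_of_map_eq_zero {k G : Type} [CommRing k] [Group G]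
    {X : ShortComplex (Rep.{0} k G)} (hX : X.ShortExact) (n : ℕ)
    (h₀ : map (MonoidHom.id G) X.g n = 0) (h₁ : map (MonoidHom.id G) X.g (n + 1) = 0) :
    Nat.card (groupCohomology X.X₁ (n + 1)) =
      Nat.card (groupCohomology X.X₃ n) * Nat.card (groupCohomology X.X₂ (n + 1)) :=
  natCard_eq_mul (δ hX n (n + 1) rfl) (map (MonoidHom.id G) X.f (n + 1))
    (mapShortComplex₁ hX rfl).zero
    { exact := mapShortComplex₁_exact hX rfl
      mono_f := (mapShortComplex₃_exact hX rfl).mono_g h₀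
      epi_g := (mapShortComplex₂_exact hX (n + 1)).epi_f h₁ }

/-- If `G` is commutative with a surjective character `χ : G → ℤ`, then
`|Hⁿ⁺¹(G, V)| = |Hⁿ(ker χ, V)| * |Hⁿ⁺¹(ker χ, V)|` for trivial coefficients `V`. -/
theorem natCard_succ_eq_mul (z : G) (hz : χ z = Multiplicative.ofAdd 1) (n : ℕ) :
    Nat.card (groupCohomology (Rep.trivial ℤ G V) (n + 1)) =
      Nat.card (groupCohomology (Rep.trivial ℤ χ.ker V) n) *
        Nat.card (groupCohomology (Rep.trivial ℤ χ.ker V) (n + 1)) := by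
  obtain ⟨w, hX⟩ := shortExact_coind_ker χ V z hz
  rw [natCard_succ_eq_mul_of_map_eq_zero hX n (map_applyAsHom_sub_id _ z n)
    (map_applyAsHom_sub_id _ z (n + 1))]
  congr 1
  · exact Nat.card_congr (coindIso (Rep.trivial ℤ χ.ker V) n).toLinearEquiv.toEquiv
  · exact Nat.card_congr (coindIso (Rep.trivial ℤ χ.ker V) (n + 1)).toLinearEquiv.toEquiv

lemma natCard_congr {G H : Type} [Group G] [Group H] (e : G ≃* H) (n : ℕ) :
    Nat.card (groupCohomology (Rep.trivial ℤ G V) n) =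
      Nat.card (groupCohomology (Rep.trivial ℤ H V) n) :=
  Nat.card_congr (mapIso (A := Rep.trivial ℤ H V) (B := Rep.trivial ℤ G V) e
    (LinearEquiv.refl ℤ V) (fun _ ↦ rfl) n).toLinearEquiv.toEquiv

section cyclic

variable [Fintype G] (g : G) (hg : ∀ x, x ∈ Subgroup.zpowers g)
include hg

lemma natCard_cyclic_odd (i : ℕ) (hi : Odd i) :
    Nat.card (groupCohomology (Rep.trivial ℤ G ℤ) i) = 1 := by
  rw [Nat.card_eq_one_iff_unique]
  refine ⟨?_, ⟨0⟩⟩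
  have e := (FiniteCyclicGroup.groupCohomologyIsoOdd (Rep.trivial ℤ G ℤ) g hg i hi)
  refine (ModuleCat.subsingleton_of_isZero (IsZero.of_iso ?_ e))
  rw [← ShortComplex.exact_iff_isZero_homology, ShortComplex.moduleCat_exact_iff]
  intro (x : ℤ) hx
  refine ⟨(0 : ℤ), ?_⟩
  have : Fintype.card G • x = 0 := by
    refine Eq.trans ?_ hx
    simp [Rep.norm, Representation.norm]
  have hx0 : x = 0 := by simpa using this
  rw [hx0]; rfl

lemma natCard_cyclic_even (i : ℕ) [NeZero i] (hi : Even i) :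
    Nat.card (groupCohomology (Rep.trivial ℤ G ℤ) i) = Nat.card G := by
  let A := Rep.trivial ℤ G ℤ
  have hker (x : A) : x ∈ LinearMap.ker (applyAsHom A g - 𝟙 A).hom.toLinearMap := sub_self x
  let q : ℤ →+ groupCohomology A i :=
    (FiniteCyclicGroup.groupCohomologyπEven A g hg i hi).hom.toAddMonoidHom.comp
      { toFun := fun x ↦ ⟨x, hker x⟩, map_zero' := rfl, map_add' := fun _ _ ↦ rfl }
  have hq : Function.Surjective q := by
    intro y
    have : Epi (FiniteCyclicGroup.groupCohomologyπEven A g hg i hi) :=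
      have : Epi (ShortComplex.moduleCatCyclesIso (FiniteCyclicGroup.normHomCompSub A g)).inv :=
        IsIso.epi_of_iso _
      epi_comp' this (epi_comp _ _)
    obtain ⟨x, rfl⟩ := (ModuleCat.epi_iff_surjective _).1 this y
    exact ⟨x.1, rfl⟩
  have hnorm (y : ℤ) : A.norm.hom.toLinearMap y = Fintype.card G • y := by
    simp [A, Rep.norm, Representation.norm]
  have hqk : q.ker = AddSubgroup.zmultiples (Nat.card G : ℤ) := by
    ext x
    rw [AddMonoidHom.mem_ker, Int.mem_zmultiples_iff]
    refine (FiniteCyclicGroup.groupCohomologyπEven_eq_zero_iff A g hg i hi ⟨x, hker x⟩).trans ?_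
    rw [Nat.card_eq_fintype_card]
    constructor
    · rintro ⟨y, hy⟩
      exact ⟨y, by rw [← nsmul_eq_mul, ← hnorm]; exact hy.symm⟩
    · rintro ⟨y, rfl⟩
      exact ⟨y, by rw [← nsmul_eq_mul]; exact hnorm y⟩
  rw [← Int.natAbs_natCast (Nat.card G), ← Int.index_zmultiples, ← hqk]
  exact (Nat.card_congr (QuotientAddGroup.quotientKerEquivOfSurjective q hq).toEquiv).symm

end cyclic

/-- The group `ℤ/m × ℤˡ`, written multiplicatively. -/
abbrev CyclicProdFree (m l : ℕ) : Type := Multiplicative (ZMod m × (Fin l → ℤ))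

/-- The character of `ℤ/m × ℤˡ⁺¹` given by the first coordinate of `ℤˡ⁺¹`. -/
def firstCoord (m l : ℕ) : CyclicProdFree m (l + 1) →* Multiplicative ℤ :=
  AddMonoidHom.toMultiplicative
    ((Pi.evalAddMonoidHom (fun _ ↦ ℤ) (0 : Fin (l + 1))).comp (AddMonoidHom.snd _ _))

/-- The kernel of the first coordinate of `ℤ/m × ℤˡ⁺¹` is `ℤ/m × ℤˡ`. -/
def kerFirstCoordEquiv (m l : ℕ) : (firstCoord m l).ker ≃* CyclicProdFree m l where
  toFun x := .ofAdd (x.1.toAdd.1, Fin.tail x.1.toAdd.2)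
  invFun y := ⟨.ofAdd (y.toAdd.1, Fin.cons 0 y.toAdd.2), rfl⟩
  left_inv x := by
    have hx : x.1.toAdd.2 0 = 0 := x.2
    refine Subtype.ext (congrArg Multiplicative.ofAdd (Prod.ext rfl ?_))
    exact (congrArg (Fin.cons · _) hx.symm).trans (Fin.cons_self_tail x.1.toAdd.2)
  right_inv _ := rfl
  map_mul' _ _ := rfl

lemma natCard_cyclicProdFree_succ (m l n : ℕ) :
    Nat.card (groupCohomology (Rep.trivial ℤ (CyclicProdFree m (l + 1)) ℤ) (n + 1)) =
      Nat.card (groupCohomology (Rep.trivial ℤ (CyclicProdFree m l) ℤ) n) *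
        Nat.card (groupCohomology (Rep.trivial ℤ (CyclicProdFree m l) ℤ) (n + 1)) := by
  rw [natCard_succ_eq_mul (firstCoord m l) ℤ (.ofAdd (0, Pi.single 0 1)) rfl,
    natCard_congr ℤ (kerFirstCoordEquiv m l), natCard_congr ℤ (kerFirstCoordEquiv m l)]

lemma mem_zpowers_cyclicProdFree_zero (m : ℕ) (x : CyclicProdFree m 0) :
    x ∈ Subgroup.zpowers (Multiplicative.ofAdd ((1, 0) : ZMod m × (Fin 0 → ℤ))) := by
  obtain ⟨a, ha⟩ := ZMod.intCast_surjective x.toAdd.1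
  refine ⟨a, ?_⟩
  refine congrArg Multiplicative.ofAdd (Prod.ext ?_ (Subsingleton.elim _ _))
  refine Eq.trans ?_ ha
  change a • (1 : ZMod m) = a
  simp

lemma natCard_cyclicProdFree_zero_odd (m : ℕ) [NeZero m] (i : ℕ) (hi : Odd i) :
    Nat.card (groupCohomology (Rep.trivial ℤ (CyclicProdFree m 0) ℤ) i) = 1 :=
  natCard_cyclic_odd _ (mem_zpowers_cyclicProdFree_zero m) i hi

lemma natCard_cyclicProdFree_zero_even (m : ℕ) [NeZero m] (i : ℕ) (h0 : i ≠ 0) (hi : Even i) :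
    Nat.card (groupCohomology (Rep.trivial ℤ (CyclicProdFree m 0) ℤ) i) = m := by
  have : NeZero i := ⟨h0⟩
  rw [natCard_cyclic_even _ (mem_zpowers_cyclicProdFree_zero m) i hi]
  simp

theorem natCard_cyclicProdFree (m : ℕ) [NeZero m] (l i : ℕ) (hi : l + 1 < i) :
    Nat.card (groupCohomology (Rep.trivial ℤ (CyclicProdFree m (l + 1)) ℤ) i) = m ^ 2 ^ l := by
  obtain ⟨i, rfl⟩ : ∃ j, i = j + 1 := ⟨i - 1, by lia⟩
  rw [natCard_cyclicProdFree_succ]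
  induction l generalizing i with
  | zero =>
    rcases Nat.even_or_odd i with h | h
    · rw [natCard_cyclicProdFree_zero_even m i (by lia) h,
        natCard_cyclicProdFree_zero_odd m (i + 1) h.add_one]
      simp
    · rw [natCard_cyclicProdFree_zero_odd m i h,
        natCard_cyclicProdFree_zero_even m (i + 1) (by lia) h.add_one]
      simp
  | succ l ih =>
    obtain ⟨i, rfl⟩ : ∃ j, i = j + 1 := ⟨i - 1, by lia⟩
    rw [natCard_cyclicProdFree_succ, natCard_cyclicProdFree_succ, ih i (by lia),
      ih (i + 1) (by lia)]
    ring

theorem natCard_cyclicProdFree_one (l i : ℕ) (hi : l < i) :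
    Nat.card (groupCohomology (Rep.trivial ℤ (CyclicProdFree 1 l) ℤ) i) = 1 := by
  cases l with
  | zero =>
    rcases Nat.even_or_odd i with h | h
    · exact natCard_cyclicProdFree_zero_even 1 i (by lia) h
    · exact natCard_cyclicProdFree_zero_odd 1 i h
  | succ l => rw [natCard_cyclicProdFree 1 l i hi, one_pow]

section transfer

variable {C : Type} [CommGroup C] [Fintype C] (π : G →* C) (s : C → G)
  (hs : ∀ c, π (s c) = c)

/-- The sum of the values of a coinduced function over the coset representatives `s c`. -/
noncomputable def coindKerToTrivial :
    coind π.ker.subtype (Rep.trivial ℤ π.ker V) ⟶ Rep.trivial ℤ G V :=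
  Rep.ofHom
    { toFun f := ∑ c, f.1 (s c)
      map_add' _ _ := Finset.sum_add_distrib
      map_smul' a f :=
        (Finset.smul_sum (r := a) (f := fun c ↦ f.1 (s c)) (s := Finset.univ)).symm
      isIntertwining' g := by
        ext f
        have key (c : C) : f.1 (s c * g) = f.1 (s (c * π g)) := by
          have := f.2 ⟨s c * g * (s (c * π g))⁻¹, by simp [MonoidHom.mem_ker, hs]⟩ (s (c * π g))
          simpa using this
        change ∑ c, f.1 (s c * g) = ∑ c, f.1 (s c)
        simp_rw [key]
        exact Fintype.sum_equiv (Equiv.mulRight (π g)) _ _ fun _ ↦ rfl }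

lemma trivialToCoind_comp_coindKerToTrivial :
    trivialToCoind V π.ker ≫ coindKerToTrivial V π s hs = Fintype.card C • 𝟙 _ := by
  ext v
  change ∑ c : C, v = _
  simp
  rfl

include s hs in
/-- `Hⁿ(G, V)` is killed by the index of `ker π` if `Hⁿ(ker π, V)` vanishes. -/
theorem card_nsmul_eq_zero (n : ℕ)
    (h : Subsingleton (groupCohomology (Rep.trivial ℤ π.ker V) n))
    (x : groupCohomology (Rep.trivial ℤ G V) n) : Fintype.card C • x = 0 := by
  have hI : IsZero (groupCohomology (coind π.ker.subtype (Rep.trivial ℤ π.ker V)) n) :=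
    (ModuleCat.isZero_of_subsingleton _).of_iso (coindIso (Rep.trivial ℤ π.ker V) n)
  have hzero : map (A := Rep.trivial ℤ G V) (B := Rep.trivial ℤ G V) (MonoidHom.id G)
      (Fintype.card C • 𝟙 (Rep.trivial ℤ G V)) n = 0 := by
    rw [← trivialToCoind_comp_coindKerToTrivial V π s hs, map_id_comp]
    exact (congrArg (· ≫ _) (hI.eq_of_tgt _ 0)).trans zero_comp
  have hsmul := (cochainsFunctor ℤ G ⋙ HomologicalComplex.homologyFunctor _ _ n).map_nsmul
    (f := 𝟙 (Rep.trivial ℤ G V)) (n := Fintype.card C)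
  have hx := hsmul.symm.trans hzero
  rw [CategoryTheory.Functor.map_id] at hx
  exact congr(ModuleCat.Hom.hom $hx x)

end transfer

/-- The projection of `ℤ/m × ℤˡ` to `ℤ/m`. -/
def toCyclic (m l : ℕ) : CyclicProdFree m l →* Multiplicative (ZMod m) :=
  AddMonoidHom.toMultiplicative (AddMonoidHom.fst _ _)

/-- The kernel of the projection to `ℤ/m` is `ℤˡ`, written as `ℤ/1 × ℤˡ`. -/
def kerToCyclicEquiv (m l : ℕ) : (toCyclic m l).ker ≃* CyclicProdFree 1 l where
  toFun x := .ofAdd (0, x.1.toAdd.2)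
  invFun y := ⟨.ofAdd (0, y.toAdd.2), rfl⟩
  left_inv x := by
    have hx : x.1.toAdd.1 = 0 := x.2
    exact Subtype.ext (congrArg Multiplicative.ofAdd (Prod.ext hx.symm rfl))
  right_inv _ := congrArg Multiplicative.ofAdd (Prod.ext (Subsingleton.elim _ _) rfl)
  map_mul' _ _ := congrArg Multiplicative.ofAdd (Prod.ext (Subsingleton.elim _ _) rfl)

theorem nsmul_cyclicProdFree_eq_zero (m : ℕ) [NeZero m] (l i : ℕ) (hi : l < i)
    (x : groupCohomology (Rep.trivial ℤ (CyclicProdFree m l) ℤ) i) : m • x = 0 := by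
  have h := natCard_congr ℤ (kerToCyclicEquiv m l) i
  rw [natCard_cyclicProdFree_one l i hi, Nat.card_eq_one_iff_unique] at h
  have := card_nsmul_eq_zero ℤ (toCyclic m l) (fun c ↦ .ofAdd (c.toAdd, 0)) (fun _ ↦ rfl) i h.1 x
  simpa using this

end groupCohomology

/-- An abelian group of order `(q * p) ^ N` killed by `q * p`, where `q` is prime to `p`, has
`p`-primary component `(ℤ/p)ᴺ`. -/
theorem nonempty_primaryComponent_addEquiv (M : Type) [AddCommGroup M] (p q N : ℕ)
    [hp : Fact p.Prime] (hpq : p.Coprime q) (hM : ∀ x : M, (q * p) • x = 0)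
    (hcard : Nat.card M = (q * p) ^ N) (hq : q ≠ 0) :
    Nonempty (AddCommGroup.primaryComponent M p ≃+ (Fin N → ZMod p)) := by
  have : Finite M := Nat.finite_of_card_ne_zero
    (hcard ▸ pow_ne_zero _ (mul_ne_zero hq hp.out.ne_zero))
  have hmem (x : M) : x ∈ AddCommGroup.primaryComponent M p ↔ p • x = 0 := by
    constructor
    · rintro ⟨n, hn⟩
      apply addOrderOf_dvd_iff_nsmul_eq_zero.1
      have h1 := addOrderOf_dvd_iff_nsmul_eq_zero.2 (hM x)
      have h2 : (addOrderOf x).Coprime q :=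
        (hpq.pow_left n).coprime_dvd_left (addOrderOf_dvd_iff_nsmul_eq_zero.2 hn)
      exact h2.dvd_of_dvd_mul_left h1
    · exact fun h ↦ ⟨1, by simpa using h⟩
  let P := AddCommGroup.primaryComponent M p
  let := AddCommGroup.zmodModule (n := p) (G := P) fun x ↦ Subtype.ext ((hmem x.1).1 x.2)
  have hP : Nat.card P = p ^ Module.finrank (ZMod p) P := by
    rw [Module.natCard_eq_pow_finrank (K := ZMod p), Nat.card_zmod]
  have hquot : (P.index).Coprime p := by
    refine ((Nat.Prime.coprime_iff_not_dvd hp.out).2 fun hdvd ↦ ?_).symm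
    obtain ⟨y, hy⟩ := exists_prime_addOrderOf_dvd_card' (G := M ⧸ P) p hdvd
    obtain ⟨x, rfl⟩ := QuotientAddGroup.mk_surjective y
    have hx : p • x ∈ P := by
      rw [← QuotientAddGroup.eq_zero_iff, QuotientAddGroup.mk_nsmul, ← hy, addOrderOf_nsmul_eq_zero]
    have hxP : x ∈ P := ⟨2, by rw [pow_two, mul_nsmul]; exact (hmem _).1 hx⟩
    rw [(QuotientAddGroup.eq_zero_iff x).2 hxP, addOrderOf_zero] at hy
    exact hp.out.one_lt.ne hy
  have hrank : Module.finrank (ZMod p) P = N := by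
    have h := P.card_mul_index
    rw [hP, hcard, mul_pow] at h
    apply Nat.pow_right_injective hp.out.two_le
    apply Nat.dvd_antisymm
    · exact ((hpq.pow _ N).dvd_of_dvd_mul_left ⟨_, h.symm⟩)
    · exact ((hquot.pow_right N).symm.dvd_of_dvd_mul_right ⟨q ^ N, by rw [h, mul_comm]⟩)
  exact ⟨(LinearEquiv.ofFinrankEq (R := ZMod p) P (Fin N → ZMod p) (by simpa using hrank)).toAddEquiv⟩

/-- Let `p` be an odd prime, `l` a positive integer and `i > l`. The `p`-primary component
of the `i`-th group cohomology of `G = ℤ/2pℤ × ℤˡ` (with trivial action on `ℤ`) is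
isomorphic as an abelian group to `(ℤ/pℤ)^{2^{l-1}}`. -/
theorem primaryComponent_groupCohomology_centralizer (p : ℕ) [Fact p.Prime] (hp : Odd p)
    (l : ℕ) (hl : 0 < l) (i : ℕ) (hi : l < i) :
    Nonempty
      ((AddCommGroup.primaryComponent
          (groupCohomology
            (Rep.trivial ℤ (Multiplicative (ZMod (2 * p) × (Fin l → ℤ))) ℤ) i) p) ≃+
        (Fin (2 ^ (l - 1)) → ZMod p)) := by
  obtain ⟨l, rfl⟩ : ∃ j, l = j + 1 := ⟨l - 1, by lia⟩
  have : NeZero (2 * p) := ⟨mul_ne_zero two_ne_zero (Fact.out : p.Prime).ne_zero⟩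
  exact nonempty_primaryComponent_addEquiv _ p 2 _ hp.coprime_two_right
    (groupCohomology.nsmul_cyclicProdFree_eq_zero (2 * p) (l + 1) i hi)
    (groupCohomology.natCard_cyclicProdFree (2 * p) l i hi) two_ne_zero
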